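/- Let a : ℝ → [0,1] satisfy (A1') and have √a κ-Lipschitz, and H ∈ 𝓗_sqc(α0,α1,γ,η) with γ > 2. Let λ > sup_{x∈{a=0}} λ̂(x) and assume there exists a bounded function f ∈ C¹(A) satisfying a(x)f' + H(x,f) = λ on A := {a > 0}. Extend f to all of ℝ by setting f(x) = p⁺_λ(x) for x ∈ {a = 0}. Then the function u(x) := ∫₀ˣ f(z) dz, x ∈ ℝ, is a Lipschitz viscosity supersolution of a(x)u'' + H(x,u') = λ on ℝ. -/

import Mathlib

open Real Set Filter Topology MeasureTheory

noncomputable section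

/-- The Hamiltonian class `𝓗(α₀, α₁, γ)`: growth condition (H1) and the local
Lipschitz conditions (H2), (H3). -/
def HamClass (a0 a1 g : ℝ) (H : ℝ → ℝ → ℝ) : Prop :=
  (∀ x p : ℝ, a0 * |p| ^ g - 1 / a0 ≤ H x p) ∧
  (∀ x p : ℝ, H x p ≤ a1 * (|p| ^ g + 1)) ∧
  (∀ x p q : ℝ, |H x p - H x q| ≤ a1 * (|p| + |q| + 1) ^ (g - 1) * |p - q|) ∧
  (∀ x y p : ℝ, |H x p - H y p| ≤ a1 * (|p| ^ g + 1) * |x - y|)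

/-- The strictly quasiconvex class `𝓗_sqc(α₀, α₁, γ, η)` with (unique) minimizer map
`phat`. -/
def HamSqc (a0 a1 g eta : ℝ) (H : ℝ → ℝ → ℝ) (phat : ℝ → ℝ) : Prop :=
  HamClass a0 a1 g H ∧
  (∀ x p : ℝ, H x (phat x) ≤ H x p) ∧
  (∀ x p : ℝ, (∀ q : ℝ, H x p ≤ H x q) → p = phat x) ∧
  (∀ x p1 p2 : ℝ, p1 < p2 → p2 ≤ phat x → eta * |p1 - p2| ≤ H x p1 - H x p2) ∧
  (∀ x p1 p2 : ℝ, phat x ≤ p1 → p1 < p2 → eta * |p1 - p2| ≤ H x p2 - H x p1)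

/-- A continuous `u` is a viscosity supersolution of `a(x) u'' + H(x, u') = lam` on `U`:
at every local minimum point `x0 ∈ U` of `u - φ`, with `φ` of class `C²`, one has
`a(x0) φ''(x0) + H(x0, φ'(x0)) ≤ lam`. -/
def ViscSuperOn (a : ℝ → ℝ) (H : ℝ → ℝ → ℝ) (lam : ℝ) (U : Set ℝ) (u : ℝ → ℝ) : Prop :=
  ∀ φ : ℝ → ℝ, ContDiff ℝ 2 φ → ∀ x0 ∈ U, IsLocalMin (fun x => u x - φ x) x0 →
    a x0 * deriv (deriv φ) x0 + H x0 (deriv φ x0) ≤ lam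

/-- Viscosity subsolution of `a(x) u'' + H(x, u') = lam` on `U`. -/
def ViscSubOn (a : ℝ → ℝ) (H : ℝ → ℝ → ℝ) (lam : ℝ) (U : Set ℝ) (u : ℝ → ℝ) : Prop :=
  ∀ φ : ℝ → ℝ, ContDiff ℝ 2 φ → ∀ x0 ∈ U, IsLocalMax (fun x => u x - φ x) x0 →
    lam ≤ a x0 * deriv (deriv φ) x0 + H x0 (deriv φ x0)

/-- Viscosity solution of `a(x) u'' + H(x, u') = lam` on `U`. -/
def ViscSolOn (a : ℝ → ℝ) (H : ℝ → ℝ → ℝ) (lam : ℝ) (U : Set ℝ) (u : ℝ → ℝ) : Prop :=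
  ViscSubOn a H lam U u ∧ ViscSuperOn a H lam U u

/-- The critical value `λ₀`: the infimum of the levels `lam` at which the stationary
equation `a u'' + H(x, u') = lam` admits a continuous viscosity supersolution on `ℝ`. -/
def CriticalValue (a : ℝ → ℝ) (H : ℝ → ℝ → ℝ) : ℝ :=
  sInf {lam : ℝ | ∃ u : ℝ → ℝ, Continuous u ∧ ViscSuperOn a H lam Set.univ u}

/-- Condition (A1'): `a ≢ 0` and every connected component of `A := {a > 0}` is bounded
(components of an open subset of `ℝ` are automatically open intervals). -/
def CondA1' (a : ℝ → ℝ) : Prop :=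
  (∃ x, a x ≠ 0) ∧
  ∀ x, 0 < a x → Bornology.IsBounded (connectedComponentIn {y : ℝ | 0 < a y} x)

/-!
At a point where `a > 0` the function `u = ∫ f` is twice differentiable and the second-derivative
test gives the inequality. At a zero `x₀` of `a`, suppose `p = φ'(x₀) < f(x₀)` and `H(x₀, p) > lam`.
Since `{H(x₀, ·) ≤ lam}` is an interval containing `f(x₀)`, there is `q > p` such that, for `x` near
`x₀`, `H(x, ·) ≥ lam + θ` at all slopes below `q` in the range of `f`. If `f(x₁) ≤ q` at a point
`x₁` with `a(x₁) > 0` slightly to the left of `x₀`, then `a f' ≤ -θ < 0` keeps `f` below `q` up to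
the next zero `c` of `a`; as `a(z) ≤ K (c - z)²`, this forces `f' ≲ -(c - z)⁻²` and `f → -∞` at `c`,
against boundedness. Hence `f > q` to the left of `x₀`, so `p ≥ q` by minimality of `u - φ` at `x₀`,
which is absurd. The case `f(x₀) < p` follows by the reflection `x ↦ -x`.

The extension by `p⁺` makes `f` upper semicontinuous on `{a = 0}`, hence measurable.
-/

section RealVariable

variable {f u φ : ℝ → ℝ} {x₀ : ℝ}

lemma hasDerivAt_const_sub_div_sub (C q : ℝ) {c z : ℝ} (hz : z < c) :
    HasDerivAt (fun z => q - C / (c - z)) (-(C / (c - z) ^ 2)) z := by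
  have hinv := ((hasDerivAt_id' z).const_sub c).fun_inv (sub_pos.2 hz).ne'
  convert! (hinv.const_mul C).const_sub q using 1
  ring

-- The fence stays below `q`, so the bound on `f'` is available wherever `f` touches it.
lemma le_sub_div_sub_of_deriv_lt_of_le {C q x₁ c : ℝ} (hC : 0 ≤ C)
    (hd : ∀ z ∈ Ico x₁ c, DifferentiableAt ℝ f z) (hx₁ : f x₁ ≤ q)
    (hf' : ∀ z ∈ Ico x₁ c, f z ≤ q → deriv f z < -(C / (c - z) ^ 2)) :
    ∀ y ∈ Ico x₁ c, f y ≤ q + C / (c - x₁) - C / (c - y) := by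
  intro y hy
  have fence_le {z : ℝ} (hz : z ∈ Ico x₁ c) : q + C / (c - x₁) - C / (c - z) ≤ q := by
    have : C / (c - x₁) ≤ C / (c - z) :=
      div_le_div_of_nonneg_left hC (sub_pos.2 hz.2) (by linarith [hz.1])
    linarith
  have fence_deriv {z : ℝ} (hz : z ∈ Icc x₁ y) :=
    hasDerivAt_const_sub_div_sub C (q + C / (c - x₁)) (hz.2.trans_lt hy.2)
  have mem {z : ℝ} (hz : z ∈ Icc x₁ y) : z ∈ Ico x₁ c := ⟨hz.1, hz.2.trans_lt hy.2⟩
  refine image_le_of_deriv_right_lt_deriv_boundary' (f' := deriv f)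
    (fun z hz => (hd z (mem hz)).continuousAt.continuousWithinAt)
    (fun z hz => (hd z (mem (Ico_subset_Icc_self hz))).hasDerivAt.hasDerivWithinAt)
    (by simpa only [add_sub_cancel_right] using hx₁)
    (fun z hz => (fence_deriv hz).continuousAt.continuousWithinAt)
    (fun z hz => (fence_deriv (Ico_subset_Icc_self hz)).hasDerivWithinAt)
    (fun z hz hfz => ?_) ⟨hy.1, le_rfl⟩
  have hz := mem (Ico_subset_Icc_self hz)
  exact hf' z hz (hfz.trans_le (fence_le hz))

lemma tendsto_atBot_of_deriv_lt_of_le {C q x₁ c : ℝ} (hC : 0 < C) (hx₁c : x₁ < c)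
    (hd : ∀ z ∈ Ico x₁ c, DifferentiableAt ℝ f z) (hx₁ : f x₁ ≤ q)
    (hf' : ∀ z ∈ Ico x₁ c, f z ≤ q → deriv f z < -(C / (c - z) ^ 2)) :
    Tendsto f (𝓝[<] c) atBot := by
  have gap_tendsto : Tendsto (fun z => c - z) (𝓝[<] c) (𝓝[>] 0) := by
    refine tendsto_nhdsWithin_iff.2 ⟨?_, ?_⟩
    · exact ((continuous_const.sub continuous_id).tendsto' c 0 (sub_self c)).mono_left
        nhdsWithin_le_nhds
    · exact eventually_mem_nhdsWithin.mono fun z (hz : z < c) => sub_pos.2 hz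
  have fence_tendsto :
      Tendsto (fun z => q + C / (c - x₁) - C / (c - z)) (𝓝[<] c) atBot := by
    simp only [div_eq_mul_inv C]
    exact tendsto_atBot_add_const_left _ _ (tendsto_neg_atTop_atBot.comp
      ((tendsto_inv_nhdsGT_zero.comp gap_tendsto).const_mul_atTop hC))
  refine tendsto_atBot_mono' _ ?_ fence_tendsto
  filter_upwards [Ico_mem_nhdsLT hx₁c]
    using le_sub_div_sub_of_deriv_lt_of_le hC.le hd hx₁ hf'

lemma deriv_deriv_nonneg_of_isLocalMin (hmin : IsLocalMin u x₀) (hu : ContinuousAt u x₀) :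
    0 ≤ deriv (deriv u) x₀ := by
  by_contra! hneg
  have hmax : IsLocalMax u x₀ := isLocalMax_of_deriv_deriv_neg hneg hmin.deriv_eq_zero hu
  have hconst : u =ᶠ[𝓝 x₀] fun _ => u x₀ := by
    filter_upwards [hmin, hmax] with x hle hge using le_antisymm hge hle
  have hzero : deriv (deriv u) x₀ = 0 := by simpa using hconst.deriv.deriv_eq
  exact hneg.ne hzero

lemma deriv_eq_and_deriv_deriv_le_of_isLocalMin_sub (hφ : ContDiff ℝ 2 φ)
    (hu : ∀ᶠ x in 𝓝 x₀, HasDerivAt u (f x) x) (hf : DifferentiableAt ℝ f x₀)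
    (hmin : IsLocalMin (fun x => u x - φ x) x₀) :
    deriv φ x₀ = f x₀ ∧ deriv (deriv φ) x₀ ≤ deriv f x₀ := by
  have hφ' : Differentiable ℝ φ := hφ.differentiable two_ne_zero
  have hφ'' : Differentiable ℝ (deriv φ) := hφ.differentiable_deriv_two
  have hderiv : ∀ᶠ x in 𝓝 x₀, HasDerivAt (fun x => u x - φ x) (f x - deriv φ x) x :=
    hu.mono fun x hx => hx.sub (hφ' x).hasDerivAt
  have hderiv₂ : deriv (deriv fun x => u x - φ x) x₀ = deriv f x₀ - deriv (deriv φ) x₀ := by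
    rw [EventuallyEq.deriv_eq (hderiv.mono fun x hx => hx.deriv)]
    exact deriv_fun_sub hf (hφ'' x₀)
  have hnonneg := deriv_deriv_nonneg_of_isLocalMin hmin hderiv.self_of_nhds.continuousAt
  have hzero := hmin.hasDerivAt_eq_zero hderiv.self_of_nhds
  constructor <;> linarith

lemma le_deriv_of_isLocalMin_integral_sub {q : ℝ} (hf : ∀ x y, IntervalIntegrable f volume x y)
    (hφ : DifferentiableAt ℝ φ x₀) (hq : ∀ᶠ x in 𝓝[<] x₀, q < f x)
    (hmin : IsLocalMin (fun x => (∫ t in (0 : ℝ)..x, f t) - φ x) x₀) :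
    q ≤ deriv φ x₀ := by
  have hslope : Tendsto (slope φ x₀) (𝓝[<] x₀) (𝓝 (deriv φ x₀)) :=
    hφ.hasDerivAt.tendsto_slope.mono_left (nhdsLT_le_nhdsNE x₀)
  obtain ⟨l, hl, hlq⟩ := mem_nhdsLT_iff_exists_Ioo_subset.1 hq
  refine ge_of_tendsto hslope ?_
  filter_upwards [Ioo_mem_nhdsLT hl, nhdsWithin_le_nhds hmin] with x ⟨hlx, hx⟩ hminx
  have hint : (x₀ - x) * q ≤ ∫ t in x..x₀, f t := by
    simpa using intervalIntegral.integral_mono_on_of_le_Ioo hx.le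
      (intervalIntegrable_const (c := q)) (hf x x₀)
      fun t ht => (hlq ⟨hlx.trans ht.1, ht.2⟩).le
  have hsub := intervalIntegral.integral_interval_sub_left (hf 0 x₀) (hf 0 x)
  rw [slope_comm, slope_def_field, le_div_iff₀ (sub_pos.2 hx)]
  linarith

end RealVariable

lemma isGreatest_of_eq_Icc {α : Type*} [Preorder α] {S : Set α} {l s u : α} (hS : S = Icc l u)
    (hs : s ∈ S) : IsGreatest S u := by
  subst hS
  exact isGreatest_Icc (hs.1.trans hs.2)

lemma exists_gt_forall_le_lt_of_ordConnected {h : ℝ → ℝ} {lam p s : ℝ} (hh : Continuous h)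
    (hconn : {r | h r ≤ lam}.OrdConnected) (hps : p < s) (hs : h s ≤ lam) (hp : lam < h p) :
    ∃ q > p, ∀ r ≤ q, lam < h r := by
  obtain ⟨q, hpq, hq⟩ := mem_nhdsGE_iff_exists_Icc_subset.1
    (mem_nhdsWithin_of_mem_nhds (hh.tendsto p (lt_mem_nhds hp)))
  refine ⟨q, hpq, fun r hrq => ?_⟩
  rcases le_total p r with hpr | hrp
  · exact hq ⟨hpr, hrq⟩
  · by_contra! hr
    exact hp.not_ge (hconn.out hr hs ⟨hrp, hps.le⟩)

section Level

variable {X : Type*} [TopologicalSpace X] {lam : ℝ}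

lemma exists_level_lt_eventually_forall_mem {Y : Type*} [TopologicalSpace Y] {H : X → Y → ℝ}
    {x₀ : X} {S : Set Y} (hH : Continuous (Function.uncurry H)) (hS : IsCompact S)
    (hlt : ∀ p ∈ S, lam < H x₀ p) :
    ∃ μ > lam, ∀ᶠ x in 𝓝 x₀, ∀ p ∈ S, μ < H x p := by
  obtain ⟨ν, hν, hνS⟩ := hS.exists_forall_le' (hH.uncurry_left x₀).continuousOn hlt
  obtain ⟨μ, hμ, hμν⟩ := exists_between hν
  exact ⟨μ, hμ, hS.eventually_forall_of_forall_eventually fun p hp =>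
    (hH.tendsto (x₀, p)).eventually (lt_mem_nhds (hμν.trans_le (hνS p hp)))⟩

lemma upperSemicontinuousOn_of_isGreatest_sublevel {H : X → ℝ → ℝ} {f : X → ℝ} {M : ℝ}
    {Z : Set X} (hH : Continuous (Function.uncurry H)) (hM : ∀ x ∈ Z, f x ≤ M)
    (hf : ∀ x ∈ Z, IsGreatest {p | H x p ≤ lam} (f x)) : UpperSemicontinuousOn f Z := by
  intro x hx q hq
  have hlt : ∀ p ∈ Icc q M, lam < H x p := fun p hp => by
    by_contra! hle
    exact (hq.trans_le hp.1).not_ge ((hf x hx).2 hle)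
  obtain ⟨μ, hμ, hnear⟩ := exists_level_lt_eventually_forall_mem hH isCompact_Icc hlt
  filter_upwards [self_mem_nhdsWithin, nhdsWithin_le_nhds hnear] with y hy hHy
  by_contra! hqy
  exact (hμ.trans (hHy (f y) ⟨hqy, hM y hy⟩)).not_ge (hf y hy).1

lemma measurable_of_continuousOn_of_isGreatest_sublevel [MeasurableSpace X] [BorelSpace X]
    {H : X → ℝ → ℝ} {f : X → ℝ} {M : ℝ} {U : Set X}
    (hH : Continuous (Function.uncurry H)) (hU : IsOpen U) (hfU : ContinuousOn f U)
    (hM : ∀ x ∉ U, f x ≤ M) (hf : ∀ x ∉ U, IsGreatest {p | H x p ≤ lam} (f x)) :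
    Measurable f :=
  measurable_of_restrict_of_restrict_compl hU.measurableSet hfU.domRestrict.measurable
    (upperSemicontinuousOn_iff_restrict.2
      (upperSemicontinuousOn_of_isGreatest_sublevel (Z := Uᶜ) hH hM hf)).measurable

end Level

/-- A nonnegative continuous diffusion coefficient that vanishes at least quadratically at each of
its zeros. This is what Lipschitz continuity of `√a` provides. -/
structure QuadraticallyDegenerate (a : ℝ → ℝ) : Prop where
  nonneg : ∀ x, 0 ≤ a x
  continuous : Continuous a
  exists_le_sq : ∃ K, ∀ x c, a c = 0 → a x ≤ K * (x - c) ^ 2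

namespace QuadraticallyDegenerate

variable {a f : ℝ → ℝ} {x₀ x₁ : ℝ}

lemma of_abs_sqrt_sub_sqrt_le {κ : ℝ} (ha : ∀ x, 0 ≤ a x)
    (hκ : ∀ x y, |√(a x) - √(a y)| ≤ κ * |x - y|) : QuadraticallyDegenerate a where
  nonneg := ha
  continuous := by
    have hsqrt : Continuous fun x => √(a x) :=
      (LipschitzWith.of_dist_le' (by simpa only [Real.dist_eq] using hκ)).continuous
    simpa only [Real.sq_sqrt (ha _)] using hsqrt.fun_pow 2
  exists_le_sq := by
    refine ⟨κ ^ 2, fun x c hc => ?_⟩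
    have hsqrt : √(a x) ≤ κ * |x - c| := by
      simpa [hc, abs_of_nonneg (Real.sqrt_nonneg _)] using hκ x c
    calc a x = √(a x) ^ 2 := (Real.sq_sqrt (ha x)).symm
      _ ≤ (κ * |x - c|) ^ 2 := by gcongr
      _ = κ ^ 2 * (x - c) ^ 2 := by rw [mul_pow, sq_abs]

lemma comp_neg (ha : QuadraticallyDegenerate a) : QuadraticallyDegenerate fun x => a (-x) where
  nonneg x := ha.nonneg (-x)
  continuous := ha.continuous.comp continuous_neg
  exists_le_sq := by
    obtain ⟨K, hK⟩ := ha.exists_le_sq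
    refine ⟨K, fun x c hc => (hK (-x) (-c) hc).trans_eq ?_⟩
    ring

lemma isOpen_pos (ha : QuadraticallyDegenerate a) : IsOpen {x | 0 < a x} :=
  isOpen_lt continuous_const ha.continuous

lemma eq_zero_of_not_pos (ha : QuadraticallyDegenerate a) (hx : ¬0 < a x₀) : a x₀ = 0 :=
  (not_lt.1 hx).antisymm (ha.nonneg x₀)

lemma exists_first_zero (ha : QuadraticallyDegenerate a) (hx : x₁ ≤ x₀) (hx₀ : a x₀ = 0)
    (hx₁ : 0 < a x₁) : ∃ c ∈ Ioc x₁ x₀, a c = 0 ∧ ∀ z ∈ Ico x₁ c, 0 < a z := by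
  have hcompact : IsCompact ({z | a z = 0} ∩ Icc x₁ x₀) :=
    isCompact_Icc.inter_left (isClosed_eq ha.continuous continuous_const)
  obtain ⟨c, ⟨hc, hc₁, hc₀⟩, hleast⟩ := hcompact.exists_isLeast ⟨x₀, hx₀, hx, le_rfl⟩
  refine ⟨c, ⟨hc₁.lt_of_ne ?_, hc₀⟩, hc, fun z hz => ?_⟩
  · rintro rfl
    exact hx₁.ne' hc
  · by_contra hz₀
    exact hz.2.not_ge (hleast ⟨ha.eq_zero_of_not_pos hz₀, hz.1, hz.2.le.trans hc₀⟩)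

lemma lt_of_mul_deriv_le_neg {θ q m : ℝ} (ha : QuadraticallyDegenerate a) (hθ : 0 < θ)
    (hd : ∀ z, 0 < a z → DifferentiableAt ℝ f z) (hm : ∀ z, m ≤ f z)
    (hx : x₁ ≤ x₀) (hx₀ : a x₀ = 0) (hx₁ : 0 < a x₁)
    (hf' : ∀ z ∈ Icc x₁ x₀, 0 < a z → f z ≤ q → a z * deriv f z ≤ -θ) : q < f x₁ := by
  by_contra! hq
  obtain ⟨c, ⟨hx₁c, hcx₀⟩, hc, hpos⟩ := ha.exists_first_zero hx hx₀ hx₁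
  obtain ⟨K, hK⟩ := ha.exists_le_sq
  have hKpos : 0 < K := pos_of_mul_pos_left (hx₁.trans_le (hK x₁ c hc)) (sq_nonneg _)
  have hderiv : ∀ z ∈ Ico x₁ c, f z ≤ q → deriv f z < -(θ / (2 * K) / (c - z) ^ 2) := by
    intro z hz hfz
    have haz : 0 < a z := hpos z hz
    have hgap : 0 < c - z := sub_pos.2 hz.2
    have hsq : a z < 2 * K * (c - z) ^ 2 := by
      have : 0 < K * (c - z) ^ 2 := by positivity
      linarith [hK z c hc, sub_sq_comm z c]
    calc deriv f z ≤ -θ / a z :=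
          (le_div_iff₀' haz).2 (hf' z ⟨hz.1, hz.2.le.trans hcx₀⟩ haz hfz)
      _ = -(θ / a z) := neg_div _ _
      _ < -(θ / (2 * K * (c - z) ^ 2)) := neg_lt_neg (div_lt_div_of_pos_left hθ haz hsq)
      _ = -(θ / (2 * K) / (c - z) ^ 2) := by rw [div_div]
  have hbot : Tendsto f (𝓝[<] c) atBot :=
    tendsto_atBot_of_deriv_lt_of_le (by positivity) hx₁c (fun z hz => hd z (hpos z hz)) hq hderiv
  obtain ⟨z, hz⟩ := (hbot.eventually_lt_atBot m).exists
  exact hz.not_ge (hm z)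

end QuadraticallyDegenerate

/-- A bounded measurable slope `f` satisfying `a f' + H(x, f) ≤ lam` classically where `a > 0` and
`H(x, f) ≤ lam` where `a = 0`. Its primitives are the candidate supersolutions. -/
structure SuperSlope (a : ℝ → ℝ) (H : ℝ → ℝ → ℝ) (lam : ℝ) (f : ℝ → ℝ) : Prop where
  measurable : Measurable f
  exists_abs_le : ∃ M, ∀ x, |f x| ≤ M
  differentiableAt : ∀ x, 0 < a x → DifferentiableAt ℝ f x
  ode_le : ∀ x, 0 < a x → a x * deriv f x + H x (f x) ≤ lam
  level_le : ∀ x, a x = 0 → H x (f x) ≤ lam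

namespace SuperSlope

variable {a : ℝ → ℝ} {H : ℝ → ℝ → ℝ} {lam : ℝ} {f φ : ℝ → ℝ} {x₀ : ℝ}

lemma intervalIntegrable (hf : SuperSlope a H lam f) (x y : ℝ) :
    IntervalIntegrable f volume x y := by
  obtain ⟨M, hM⟩ := hf.exists_abs_le
  exact (intervalIntegrable_const (c := M)).mono_fun hf.measurable.aestronglyMeasurable
    (Eventually.of_forall fun t => (hM t).trans (le_abs_self M))

lemma exists_abs_integral_sub_le (hf : SuperSlope a H lam f) :
    ∃ K : ℝ, ∀ x y : ℝ, |(∫ t in (0 : ℝ)..x, f t) - ∫ t in (0 : ℝ)..y, f t| ≤ K * |x - y| := by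
  obtain ⟨M, hM⟩ := hf.exists_abs_le
  refine ⟨M, fun x y => ?_⟩
  rw [intervalIntegral.integral_interval_sub_left (hf.intervalIntegrable _ _)
    (hf.intervalIntegrable _ _)]
  exact intervalIntegral.norm_integral_le_of_norm_le_const (f := f) fun t _ => hM t

lemma comp_neg (hf : SuperSlope a H lam f) :
    SuperSlope (fun x => a (-x)) (fun x p => H (-x) (-p)) lam (fun x => -f (-x)) where
  measurable := (hf.measurable.comp measurable_neg).neg
  exists_abs_le := by
    obtain ⟨M, hM⟩ := hf.exists_abs_le
    exact ⟨M, fun x => by simpa only [abs_neg] using hM (-x)⟩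
  differentiableAt x hx := ((hf.differentiableAt (-x) hx).comp x differentiableAt_id.neg).neg
  ode_le x hx := by
    simpa only [deriv.fun_neg, deriv_comp_neg, neg_neg] using hf.ode_le (-x) hx
  level_le x hx := by simpa only [neg_neg] using hf.level_le (-x) hx

lemma eventually_lt_left {q : ℝ} (hf : SuperSlope a H lam f) (ha : QuadraticallyDegenerate a)
    (hH : Continuous (Function.uncurry H)) (hx₀ : a x₀ = 0) (hq : ∀ p ≤ q, lam < H x₀ p) :
    ∀ᶠ x in 𝓝[<] x₀, q < f x := by
  obtain ⟨M, hM⟩ := hf.exists_abs_le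
  obtain ⟨μ, hμ, hnear⟩ :=
    exists_level_lt_eventually_forall_mem hH (isCompact_Icc (a := -M)) fun p hp => hq p hp.2
  obtain ⟨l, hl, hlx₀⟩ := mem_nhdsLE_iff_exists_Ioc_subset.1 (nhdsWithin_le_nhds hnear)
  have hlevel {z : ℝ} (hz : z ∈ Ioc l x₀) (hfz : f z ≤ q) : μ < H z (f z) :=
    hlx₀ hz (f z) ⟨(abs_le.1 (hM z)).1, hfz⟩
  filter_upwards [Ioo_mem_nhdsLT hl] with x hx
  by_cases hax : 0 < a x
  · refine ha.lt_of_mul_deriv_le_neg (sub_pos.2 hμ) hf.differentiableAt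
      (fun z => (abs_le.1 (hM z)).1) hx.2.le hx₀ hax fun z hz haz hfz => ?_
    linarith [hf.ode_le z haz, hlevel ⟨hx.1.trans_le hz.1, hz.2⟩ hfz]
  · by_contra! hfx
    exact (hμ.trans (hlevel (Ioo_subset_Ioc_self hx) hfx)).not_ge
      (hf.level_le x (ha.eq_zero_of_not_pos hax))

lemma level_deriv_le_of_deriv_lt (hf : SuperSlope a H lam f) (ha : QuadraticallyDegenerate a)
    (hH : Continuous (Function.uncurry H)) (hx₀ : a x₀ = 0)
    (hconn : {p | H x₀ p ≤ lam}.OrdConnected) (hφ : DifferentiableAt ℝ φ x₀)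
    (hmin : IsLocalMin (fun x => (∫ t in (0 : ℝ)..x, f t) - φ x) x₀) (hlt : deriv φ x₀ < f x₀) :
    H x₀ (deriv φ x₀) ≤ lam := by
  by_contra! hgt
  obtain ⟨q, hq, hqH⟩ := exists_gt_forall_le_lt_of_ordConnected (hH.uncurry_left x₀) hconn hlt
    (hf.level_le x₀ hx₀) hgt
  exact hq.not_ge (le_deriv_of_isLocalMin_integral_sub hf.intervalIntegrable hφ
    (hf.eventually_lt_left ha hH hx₀ hqH) hmin)

lemma level_deriv_le_of_lt_deriv (hf : SuperSlope a H lam f) (ha : QuadraticallyDegenerate a)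
    (hH : Continuous (Function.uncurry H)) (hx₀ : a x₀ = 0)
    (hconn : {p | H x₀ p ≤ lam}.OrdConnected) (hφ : DifferentiableAt ℝ φ x₀)
    (hmin : IsLocalMin (fun x => (∫ t in (0 : ℝ)..x, f t) - φ x) x₀) (hlt : f x₀ < deriv φ x₀) :
    H x₀ (deriv φ x₀) ≤ lam := by
  have hprimitive (x : ℝ) : ∫ t in (0 : ℝ)..x, -f (-t) = ∫ t in (0 : ℝ)..-x, f t := by
    rw [intervalIntegral.integral_neg, intervalIntegral.integral_comp_neg, neg_zero,
      ← intervalIntegral.integral_symm]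
  have hmin' : IsLocalMin (fun x => (∫ t in (0 : ℝ)..x, -f (-t)) - φ (-x)) (-x₀) := by
    simp only [hprimitive]
    exact IsLocalMin.comp_continuous (f := fun x => (∫ t in (0 : ℝ)..x, f t) - φ x)
      (g := Neg.neg) (by rwa [neg_neg]) continuous_neg.continuousAt
  have hφ' : DifferentiableAt ℝ (fun x => φ (-x)) (-x₀) :=
    DifferentiableAt.comp (-x₀) (by rwa [neg_neg]) differentiableAt_id.neg
  have hconn' : {p | H (- -x₀) (-p) ≤ lam}.OrdConnected := by
    simp only [neg_neg]
    exact hconn.preimage_anti fun _ _ => neg_le_neg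
  simpa only [deriv_comp_neg, neg_neg] using hf.comp_neg.level_deriv_le_of_deriv_lt ha.comp_neg
    (hH.comp continuous_neg) (by rwa [neg_neg]) hconn' hφ' hmin'
    (by simpa only [deriv_comp_neg, neg_neg] using neg_lt_neg hlt)

theorem viscSuperOn_integral (hf : SuperSlope a H lam f) (ha : QuadraticallyDegenerate a)
    (hH : Continuous (Function.uncurry H))
    (hconn : ∀ x, a x = 0 → {p | H x p ≤ lam}.OrdConnected) :
    ViscSuperOn a H lam univ (fun x => ∫ t in (0 : ℝ)..x, f t) := by
  intro φ hφ x₀ _ hmin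
  have hφ' : DifferentiableAt ℝ φ x₀ := hφ.differentiable two_ne_zero x₀
  by_cases hax₀ : 0 < a x₀
  · have hderiv : ∀ᶠ x in 𝓝 x₀, HasDerivAt (fun x => ∫ t in (0 : ℝ)..x, f t) (f x) x := by
      filter_upwards [ha.isOpen_pos.mem_nhds hax₀] with x hx
      exact intervalIntegral.integral_hasDerivAt_right (hf.intervalIntegrable 0 x)
        hf.measurable.stronglyMeasurable.stronglyMeasurableAtFilter
        (hf.differentiableAt x hx).continuousAt
    obtain ⟨hfirst, hsecond⟩ := deriv_eq_and_deriv_deriv_le_of_isLocalMin_sub hφ hderiv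
      (hf.differentiableAt x₀ hax₀) hmin
    calc a x₀ * deriv (deriv φ) x₀ + H x₀ (deriv φ x₀)
        ≤ a x₀ * deriv f x₀ + H x₀ (f x₀) := by rw [hfirst]; gcongr
      _ ≤ lam := hf.ode_le x₀ hax₀
  · have hx₀ : a x₀ = 0 := ha.eq_zero_of_not_pos hax₀
    rw [hx₀, zero_mul, zero_add]
    rcases lt_trichotomy (deriv φ x₀) (f x₀) with hlt | heq | hgt
    · exact hf.level_deriv_le_of_deriv_lt ha hH hx₀ (hconn x₀ hx₀) hφ' hmin hlt
    · exact heq ▸ hf.level_le x₀ hx₀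
    · exact hf.level_deriv_le_of_lt_deriv ha hH hx₀ (hconn x₀ hx₀) hφ' hmin hgt

lemma of_isGreatest {R : ℝ} (ha : QuadraticallyDegenerate a)
    (hH : Continuous (Function.uncurry H)) (hR : ∀ x p, a x = 0 → H x p ≤ lam → |p| ≤ R)
    (hfd : DifferentiableOn ℝ f {x | 0 < a x}) (hfbdd : ∃ M, ∀ x, 0 < a x → |f x| ≤ M)
    (hode : ∀ x, 0 < a x → a x * deriv f x + H x (f x) ≤ lam)
    (hext : ∀ x, a x = 0 → IsGreatest {p | H x p ≤ lam} (f x)) : SuperSlope a H lam f where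
  measurable := by
    refine measurable_of_continuousOn_of_isGreatest_sublevel (M := R) hH ha.isOpen_pos
      hfd.continuousOn (fun x hx => ?_) fun x hx => hext x (ha.eq_zero_of_not_pos hx)
    have hx₀ : a x = 0 := ha.eq_zero_of_not_pos hx
    exact (le_abs_self _).trans (hR x _ hx₀ (hext x hx₀).1)
  exists_abs_le := by
    obtain ⟨M, hM⟩ := hfbdd
    refine ⟨max M R, fun x => ?_⟩
    by_cases hx : 0 < a x
    · exact le_max_of_le_left (hM x hx)
    · have hx₀ : a x = 0 := ha.eq_zero_of_not_pos hx
      exact le_max_of_le_right (hR x _ hx₀ (hext x hx₀).1)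
  differentiableAt x hx := hfd.differentiableAt (ha.isOpen_pos.mem_nhds hx)
  ode_le := hode
  level_le x hx := (hext x hx).1

end SuperSlope

namespace HamClass

variable {a0 a1 g : ℝ} {H : ℝ → ℝ → ℝ}

lemma continuous_uncurry (hH : HamClass a0 a1 g H) (hg : 0 ≤ g) :
    Continuous (Function.uncurry H) := by
  obtain ⟨-, -, hslope, hspace⟩ := hH
  refine continuous_iff_continuousAt.2 fun ⟨x, p⟩ => ?_
  set bound : ℝ × ℝ → ℝ := fun z =>
    a1 * (|z.2| ^ g + 1) * |z.1 - x| + a1 * (|z.2| + |p| + 1) ^ (g - 1) * |z.2 - p|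
  have hbound : Continuous bound := by
    have hpow : Continuous fun z : ℝ × ℝ => (|z.2| + |p| + 1) ^ (g - 1) :=
      Continuous.rpow_const (by fun_prop) fun z => Or.inl (by positivity)
    fun_prop
  refine tendsto_iff_dist_tendsto_zero.2 (squeeze_zero (fun _ => dist_nonneg) (fun z => ?_)
    (hbound.tendsto' (x, p) 0 (by simp [bound])))
  calc dist (H z.1 z.2) (H x p) ≤ dist (H z.1 z.2) (H x z.2) + dist (H x z.2) (H x p) :=
        dist_triangle _ _ _
    _ ≤ bound z := add_le_add (hspace z.1 x z.2) (hslope x z.2 p)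

lemma abs_le_of_le (hH : HamClass a0 a1 g H) (ha0 : 0 < a0) (hg : 0 < g) {lam x p : ℝ}
    (hp : H x p ≤ lam) : |p| ≤ ((lam + 1 / a0) / a0) ^ g⁻¹ := by
  have hpow : |p| ^ g ≤ (lam + 1 / a0) / a0 := by
    rw [le_div_iff₀' ha0]
    linarith [hH.1 x p]
  have hnonneg : 0 ≤ |p| ^ g := Real.rpow_nonneg (abs_nonneg p) g
  exact (Real.le_rpow_inv_iff_of_pos (abs_nonneg p) (hnonneg.trans hpow) hg).2 hpow

end HamClass

theorem statement_17_general {a : ℝ → ℝ} {H : ℝ → ℝ → ℝ} {κ R lam : ℝ} {f : ℝ → ℝ}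
    (ha : ∀ x, 0 ≤ a x) (hκ : ∀ x y, |√(a x) - √(a y)| ≤ κ * |x - y|)
    (hH : Continuous (Function.uncurry H)) (hR : ∀ x p, a x = 0 → H x p ≤ lam → |p| ≤ R)
    (hconn : ∀ x, a x = 0 → {p | H x p ≤ lam}.OrdConnected)
    (hfd : DifferentiableOn ℝ f {x | 0 < a x}) (hfbdd : ∃ M, ∀ x, 0 < a x → |f x| ≤ M)
    (hode : ∀ x, 0 < a x → a x * deriv f x + H x (f x) ≤ lam)
    (hext : ∀ x, a x = 0 → IsGreatest {p | H x p ≤ lam} (f x)) :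
    (∃ K : ℝ, ∀ x y : ℝ,
      |(∫ t in (0 : ℝ)..x, f t) - ∫ t in (0 : ℝ)..y, f t| ≤ K * |x - y|) ∧
    ViscSuperOn a H lam univ (fun x => ∫ t in (0 : ℝ)..x, f t) := by
  have ha' : QuadraticallyDegenerate a := .of_abs_sqrt_sub_sqrt_le ha hκ
  have hf : SuperSlope a H lam f := .of_isGreatest ha' hH hR hfd hfbdd hode hext
  exact ⟨hf.exists_abs_integral_sub_le, hf.viscSuperOn_integral ha' hH hconn⟩

/-- Theorem `appC teo supersolution`: let `lam > sup_{x∈{a=0}} λ̂(x)` and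
let `f` be a bounded `C¹` solution of `a f' + H(x,f) = lam` on `A := {a > 0}`, extended by
`f = p⁺_lam` on `{a = 0}`.  Then `u(x) := ∫₀ˣ f` is a Lipschitz viscosity supersolution of
`a u'' + H(x,u') = lam` on `ℝ`. -/
theorem statement_17
    (a : ℝ → ℝ) (H : ℝ → ℝ → ℝ) (phat : ℝ → ℝ) (pm pp : ℝ → ℝ → ℝ)
    (κ α0 α1 γ η : ℝ)
    (harange : ∀ x, a x ∈ Set.Icc (0:ℝ) 1)
    (hκ : 0 < κ) (hA2 : ∀ x y : ℝ, |Real.sqrt (a x) - Real.sqrt (a y)| ≤ κ * |x - y|)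
    (hA1' : CondA1' a)
    (hα0 : 0 < α0) (hα1 : 0 < α1) (hγ : 2 < γ) (hη : 0 < η)
    (hH : HamSqc α0 α1 γ η H phat)
    (hp : ∀ lam x : ℝ, H x (phat x) ≤ lam →
      {p : ℝ | H x p ≤ lam} = Set.Icc (pm lam x) (pp lam x))
    (lam : ℝ)
    -- `lam > sup_{x ∈ {a=0}} λ̂(x)`
    (hlam : ∃ c : ℝ, c < lam ∧ ∀ x : ℝ, a x = 0 → H x (phat x) ≤ c)
    (f : ℝ → ℝ)
    (hf1 : ContDiffOn ℝ 1 f {x : ℝ | 0 < a x})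
    (hfbdd : ∃ M : ℝ, ∀ x : ℝ, 0 < a x → |f x| ≤ M)
    (hode : ∀ x : ℝ, 0 < a x → a x * deriv f x + H x (f x) = lam)
    (hext : ∀ x : ℝ, a x = 0 → f x = pp lam x) :
    (∃ K : ℝ, ∀ x y : ℝ,
      |(∫ t in (0:ℝ)..x, f t) - ∫ t in (0:ℝ)..y, f t| ≤ K * |x - y|) ∧
    ViscSuperOn a H lam Set.univ (fun x => ∫ t in (0:ℝ)..x, f t) := by
  obtain ⟨c, hc, hcle⟩ := hlam
  have hmem (x : ℝ) (hx : a x = 0) : H x (phat x) ≤ lam := (hcle x hx).trans hc.le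
  have hIcc (x : ℝ) (hx : a x = 0) : {p | H x p ≤ lam} = Icc (pm lam x) (pp lam x) :=
    hp lam x (hmem x hx)
  have hγ' : 0 < γ := two_pos.trans hγ
  exact statement_17_general (fun x => (harange x).1) hA2 (hH.1.continuous_uncurry hγ'.le)
    (fun _ _ _ => hH.1.abs_le_of_le hα0 hγ') (fun x hx => hIcc x hx ▸ ordConnected_Icc)
    (hf1.differentiableOn one_ne_zero) hfbdd (fun x hx => (hode x hx).le)
    (fun x hx => hext x hx ▸ isGreatest_of_eq_Icc (hIcc x hx) (hmem x hx))
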